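/- Let w be a weight function with w(0) = 0, w(1) = 1 and w(2) = 1 + x for some rational x with 0 < x ≤ 1. Let U = {u_1, …, u_{3q}} with q even and q ≥ 4, and let E = {e_1, …, e_m} be a collection of 3-element subsets of U. Consider the candidate set C = U ∪ {c, d, z} and the linear partial profile consisting of: for each e ∈ E, a voter v_e with Top(v_e) = ∅, Middle(v_e) = e ∪ {c} equipped with a linear order that ranks c last (and the three elements of e above c in some order), and Bottom(v_e) = (U ∖ e) ∪ {d, z}; together with 2q + 1 voters with empty Middle: q/2 voters with Top = {z}, q/2 voters with Top = {z} ∪ U, q/2 voters with Top = {d}, q/2 voters with Top = {d} ∪ U, and one voter with Top = {c, d, z}. Then {c, d} is a possible committee of size 2 under w-Thiele if and only if there exist q pairwise disjoint sets in E whose union is U. -/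

import Mathlib

open Finset

/-- The `w`-Thiele score of a set `S` under approval profile `A`. -/
def thieleScore {V C : Type*} [Fintype V] [DecidableEq C]
    (w : ℕ → ℚ) (A : V → Finset C) (S : Finset C) : ℚ :=
  ∑ v, w ((S ∩ A v).card)

/-- `W` is a winning committee of size `k` under `w`-Thiele in `A`. -/
def IsWinning {V C : Type*} [Fintype V] [DecidableEq C]
    (w : ℕ → ℚ) (k : ℕ) (A : V → Finset C) (W : Finset C) : Prop :=
  W.card = k ∧ ∀ W' : Finset C, W'.card = k → thieleScore w A W' ≤ thieleScore w A W

/-- `A` is a completion of the linear partial profile given by `Top` and the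
linear orders `ord` on the middle candidates: each voter approves `Top v`
together with a prefix of `ord v`. -/
def IsLinCompletion {V C : Type*} [DecidableEq C] (Top : V → Finset C) (ord : V → List C)
    (A : V → Finset C) : Prop :=
  ∀ v, ∃ j, A v = Top v ∪ ((ord v).take j).toFinset

/-- Candidates: `Sum.inl u` for the elements `u ∈ U`, and `Sum.inr 0 = c`,
`Sum.inr 1 = d`, `Sum.inr 2 = z`.
Voters: `Sum.inl i` is the voter `v_{e_i}`, with `Top = ∅`;
`Sum.inr (Sum.inl (0,s))` are the `q/2` voters approving `{z}`;
`Sum.inr (Sum.inl (1,s))` are the `q/2` voters approving `{z} ∪ U`;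
`Sum.inr (Sum.inl (2,s))` are the `q/2` voters approving `{d}`;
`Sum.inr (Sum.inl (3,s))` are the `q/2` voters approving `{d} ∪ U`;
`Sum.inr (Sum.inr ())` is the voter approving `{c, d, z}`.
Here `p = q/2`. -/
def redTop8 (U : Type*) [Fintype U] [DecidableEq U] (m p : ℕ) :
    Fin m ⊕ (Fin 4 × Fin p) ⊕ Unit → Finset (U ⊕ Fin 3)
  | Sum.inl _ => ∅
  | Sum.inr (Sum.inl (j, _)) =>
      if j.val = 0 then {Sum.inr 2}
      else if j.val = 1 then insert (Sum.inr 2) (Finset.univ.image (Sum.inl : U → U ⊕ Fin 3))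
      else if j.val = 2 then {Sum.inr 1}
      else insert (Sum.inr 1) (Finset.univ.image (Sum.inl : U → U ⊕ Fin 3))
  | Sum.inr (Sum.inr _) => {Sum.inr 0, Sum.inr 1, Sum.inr 2}

/-!
Write `N(S)` for the number of voters approving all of `S`. The score of a pair is
`N(a) + N(b) - (1 - x) N(a, b)`.

If the voters `v_e` with `e` in an exact cover approve `e ∪ {c}` and the other `v_e` approve nobody,
then every candidate has exactly `q + 1` approvers, every two candidates share an approver, and `c`
and `d` share only one, so no pair scores more than `{c, d}`.

Conversely, if `{c, d}` wins, the comparison with `{d, z}` shows that at least `q` of the voters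
`v_e` approve `c`; since `c` is last in their order, they approve all of `e`. The comparison with
`{c, u}` then shows that at most one of these `e` contains `u`, so they are disjoint and cover `U`.
-/

section Approvers

variable {V V' C : Type*} [Fintype V] [Fintype V'] [DecidableEq C]

/-- The voters who approve every candidate in `S`. For a committee of size two, the sizes of these
sets for `S` of size at most two determine the Thiele score. -/
def approvers (A : V → Finset C) (S : Finset C) : Finset V := {v | S ⊆ A v}

theorem mem_approvers {A : V → Finset C} {S : Finset C} {v : V} :
    v ∈ approvers A S ↔ S ⊆ A v := by
  simp [approvers]

theorem card_approvers_eq_sum (A : V → Finset C) (S : Finset C) :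
    #(approvers A S) = ∑ v, if S ⊆ A v then 1 else 0 :=
  card_filter _ _

theorem approvers_anti (A : V → Finset C) {S T : Finset C} (hST : S ⊆ T) :
    approvers A T ⊆ approvers A S := fun _ hv ↦
  mem_approvers.2 (hST.trans (mem_approvers.1 hv))

theorem card_approvers_sumElim (A : V → Finset C) (A' : V' → Finset C) (S : Finset C) :
    #(approvers (Sum.elim A A') S) = #(approvers A S) + #(approvers A' S) := by
  rw [← card_disjSum]
  congr 1
  ext (v | v) <;> simp [mem_approvers]

variable {w : ℕ → ℚ} {x : ℚ}

theorem weight_card_pair_inter (hw0 : w 0 = 0) (hw1 : w 1 = 1) (hw2 : w 2 = 1 + x)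
    {a b : C} (hab : a ≠ b) (X : Finset C) :
    w #({a, b} ∩ X) = (if {a} ⊆ X then 1 else 0) + (if {b} ⊆ X then 1 else 0)
      - (1 - x) * (if {a, b} ⊆ X then 1 else 0) := by
  by_cases ha : a ∈ X <;> by_cases hb : b ∈ X <;>
    simp [insert_inter_of_mem, insert_inter_of_notMem, insert_subset_iff, ha, hb, hab,
      hw0, hw1, hw2]

theorem thieleScore_pair (hw0 : w 0 = 0) (hw1 : w 1 = 1) (hw2 : w 2 = 1 + x)
    (A : V → Finset C) {a b : C} (hab : a ≠ b) :
    thieleScore w A {a, b} = #(approvers A {a}) + #(approvers A {b})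
      - (1 - x) * #(approvers A {a, b}) := by
  simp only [thieleScore, weight_card_pair_inter hw0 hw1 hw2 hab, sum_sub_distrib, sum_add_distrib,
    ← mul_sum, card_approvers_eq_sum, Nat.cast_sum, Nat.cast_ite, Nat.cast_one, Nat.cast_zero]

theorem isWinning_pair_of_card_approvers (hw0 : w 0 = 0) (hw1 : w 1 = 1) (hw2 : w 2 = 1 + x)
    (hx1 : x ≤ 1) {A : V → Finset C} {n : ℕ}
    (hn : ∀ a, #(approvers A {a}) = n) {a b : C} (hab : a ≠ b)
    (hmin : ∀ a' b', a' ≠ b' → #(approvers A {a, b}) ≤ #(approvers A {a', b'})) :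
    IsWinning w 2 A {a, b} := by
  refine ⟨card_pair hab, fun W' hW' ↦ ?_⟩
  obtain ⟨a', b', hab', rfl⟩ := card_eq_two.1 hW'
  rw [thieleScore_pair hw0 hw1 hw2 A hab, thieleScore_pair hw0 hw1 hw2 A hab']
  simp only [hn]
  have : (0 : ℚ) ≤ 1 - x := sub_nonneg.2 hx1
  have : (#(approvers A {a, b}) : ℚ) ≤ #(approvers A {a', b'}) := mod_cast hmin a' b' hab'
  gcongr

end Approvers

theorem toFinset_take_subset {α : Type*} [DecidableEq α] (l : List α) (j : ℕ) :
    (l.take j).toFinset ⊆ l.toFinset := fun _ ha ↦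
  List.mem_toFinset.2 (List.mem_of_mem_take (List.mem_toFinset.1 ha))

theorem take_eq_self_of_getLast?_mem {α : Type*} {l : List α} {c : α} {j : ℕ} (hnd : l.Nodup)
    (hlast : l.getLast? = some c) (hc : c ∈ l.take j) : l.take j = l := by
  obtain ⟨l', rfl⟩ := List.getLast?_eq_some_iff.1 hlast
  refine List.take_of_length_le (Nat.not_lt.1 fun hj ↦ ?_)
  rw [List.length_append, List.length_singleton, Nat.lt_succ_iff] at hj
  rw [List.take_append_of_le_length hj] at hc
  exact List.disjoint_of_nodup_append hnd (List.mem_of_mem_take hc) (List.mem_singleton_self c)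

theorem exists_subset_card_eq_biUnion_eq_univ {ι U : Type*} [Fintype U] [DecidableEq U]
    {e : ι → Finset U} {B : Finset ι} {q r : ℕ} (hU : Fintype.card U = r * q)
    (he : ∀ i, #(e i) = r) (hq : q ≤ #B) (hdisj : (B : Set ι).PairwiseDisjoint e) :
    ∃ B' ⊆ B, #B' = q ∧ B'.biUnion e = univ := by
  obtain ⟨B', hB'B, hB'⟩ := exists_subset_card_eq hq
  refine ⟨B', hB'B, hB', eq_univ_of_card _ ?_⟩
  rw [card_biUnion fun i hi j hj ↦ hdisj (hB'B hi) (hB'B hj), sum_const_nat fun i _ ↦ he i, hB',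
    hU, mul_comm]

theorem card_filter_mem_eq_one {ι U : Type*} [Fintype U] [DecidableEq U] {e : ι → Finset U}
    {B : Finset ι} (hdisj : (B : Set ι).PairwiseDisjoint e) (hcov : B.biUnion e = univ) (u : U) :
    #{i ∈ B | u ∈ e i} = 1 := by
  obtain ⟨i, hi, hui⟩ := mem_biUnion.1 (hcov ▸ mem_univ u)
  refine card_eq_one.2 ⟨i, eq_singleton_iff_unique_mem.2 ⟨mem_filter.2 ⟨hi, hui⟩, fun j hj ↦ ?_⟩⟩
  rw [mem_filter] at hj
  exact hdisj.elim_finset hj.1 hi u hj.2 hui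

section Reduction

variable {U : Type*} [DecidableEq U] {m p : ℕ} {e : Fin m → Finset U}
  {E : Fin m → Finset (U ⊕ Fin 3)}

/-- The set `s ∪ {c}` of all middle candidates of the voter `v_s`. -/
def edgeBallot (s : Finset U) : Finset (U ⊕ Fin 3) := s.image Sum.inl ∪ {Sum.inr 0}

/-- The ballots of the voters `v_e` when those with `e` in the subfamily `B` approve all of
`e ∪ {c}` and the others approve nobody. -/
def coverBallots (e : Fin m → Finset U) (B : Finset (Fin m)) (i : Fin m) : Finset (U ⊕ Fin 3) :=
  if i ∈ B then edgeBallot (e i) else ∅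

theorem inl_mem_edgeBallot {s : Finset U} {u : U} : Sum.inl u ∈ edgeBallot s ↔ u ∈ s := by
  simp [edgeBallot]

theorem inr_mem_edgeBallot {s : Finset U} {k : Fin 3} : Sum.inr k ∈ edgeBallot s ↔ k = 0 := by
  simp [edgeBallot]

theorem approvers_eq_empty_of_subset_edgeBallot (hE : ∀ i, E i ⊆ edgeBallot (e i))
    {S : Finset (U ⊕ Fin 3)} {k : Fin 3} (hk : k ≠ 0) (hkS : Sum.inr k ∈ S) :
    approvers E S = ∅ :=
  filter_eq_empty_iff.2 fun i _ hi ↦ hk (inr_mem_edgeBallot.1 (hE i (hi hkS)))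

theorem coverBallots_subset_edgeBallot (e : Fin m → Finset U) (B : Finset (Fin m)) (i : Fin m) :
    coverBallots e B i ⊆ edgeBallot (e i) := by
  unfold coverBallots
  split_ifs
  exacts [Subset.rfl, empty_subset _]

theorem mem_coverBallots {B : Finset (Fin m)} {i : Fin m} {a : U ⊕ Fin 3} :
    a ∈ coverBallots e B i ↔ i ∈ B ∧ a ∈ edgeBallot (e i) := by
  unfold coverBallots
  split_ifs with hi <;> simp [hi]

theorem approvers_coverBallots_inr_zero (e : Fin m → Finset U) (B : Finset (Fin m)) :
    approvers (coverBallots e B) {Sum.inr 0} = B := by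
  ext i
  simp [mem_approvers, mem_coverBallots, inr_mem_edgeBallot]

theorem approvers_coverBallots_inl (e : Fin m → Finset U) (B : Finset (Fin m)) (u : U) :
    approvers (coverBallots e B) {Sum.inl u} = {i ∈ B | u ∈ e i} := by
  ext i
  simp [mem_approvers, mem_coverBallots, inl_mem_edgeBallot]

theorem approvers_coverBallots_inr_zero_inl (e : Fin m → Finset U) (B : Finset (Fin m)) (u : U) :
    approvers (coverBallots e B) {Sum.inr 0, Sum.inl u} = {i ∈ B | u ∈ e i} := by
  ext i
  simp +contextual [mem_approvers, mem_coverBallots, insert_subset_iff, inl_mem_edgeBallot,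
    inr_mem_edgeBallot]

theorem pairwiseDisjoint_approvers_inr_zero
    (hE : ∀ i, Sum.inr 0 ∈ E i → E i = edgeBallot (e i))
    (hcu : ∀ u, #(approvers E {Sum.inr 0, Sum.inl u}) ≤ 1) :
    (approvers E {Sum.inr 0} : Set (Fin m)).PairwiseDisjoint e := by
  intro i hi j hj hij
  refine disjoint_left.2 fun u hui huj ↦ hij (card_le_one.1 (hcu u) i ?_ j ?_) <;>
    simp_all [mem_approvers, insert_subset_iff, inl_mem_edgeBallot, inr_mem_edgeBallot]

variable [Fintype U]

/-- The profile in which the voters `v_e` have the ballots `E` and the other voters, whose middle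
is empty, approve their top candidates. -/
def reductionProfile (p : ℕ) (E : Fin m → Finset (U ⊕ Fin 3)) :
    Fin m ⊕ (Fin 4 × Fin p) ⊕ Unit → Finset (U ⊕ Fin 3) :=
  Sum.elim E (redTop8 U m p ∘ Sum.inr)

theorem isLinCompletion_redTop8_iff {ord : Fin m ⊕ (Fin 4 × Fin p) ⊕ Unit → List (U ⊕ Fin 3)}
    (hord : ∀ v, ord (Sum.inr v) = []) {A : Fin m ⊕ (Fin 4 × Fin p) ⊕ Unit → Finset (U ⊕ Fin 3)} :
    IsLinCompletion (redTop8 U m p) ord A ↔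
      ∃ E, A = reductionProfile p E ∧ ∀ i, ∃ j, E i = ((ord (Sum.inl i)).take j).toFinset := by
  constructor
  · intro hA
    refine ⟨A ∘ Sum.inl, funext ?_, fun i ↦ ?_⟩
    · rintro (i | v)
      · rfl
      · simpa [hord, reductionProfile] using hA (Sum.inr v)
    · simpa [redTop8] using hA (Sum.inl i)
  · rintro ⟨E, rfl, hE⟩ (i | v)
    · simpa [reductionProfile, redTop8] using hE i
    · simp [reductionProfile, hord]

namespace reductionProfile

theorem card_approvers (p : ℕ) (E : Fin m → Finset (U ⊕ Fin 3)) (S : Finset (U ⊕ Fin 3)) :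
    #(approvers (reductionProfile p E) S) = #(approvers E S)
      + (p * ((if S ⊆ {Sum.inr 2} then 1 else 0)
          + (if S ⊆ insert (Sum.inr 2) (univ.image Sum.inl) then 1 else 0)
          + (if S ⊆ {Sum.inr 1} then 1 else 0)
          + (if S ⊆ insert (Sum.inr 1) (univ.image Sum.inl) then 1 else 0))
        + (if S ⊆ {Sum.inr 0, Sum.inr 1, Sum.inr 2} then 1 else 0)) := by
  rw [reductionProfile, card_approvers_sumElim, card_approvers_eq_sum (_ ∘ _),
    Fintype.sum_sum_type, Fintype.sum_prod_type]
  have hconst (T : Finset (U ⊕ Fin 3)) :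
      p * (if S ⊆ T then 1 else 0) = ∑ _ : Fin p, if S ⊆ T then 1 else 0 := by
    rw [sum_const, card_univ, Fintype.card_fin, smul_eq_mul]
  simp only [mul_add, hconst, Fin.sum_univ_four, Fintype.sum_unique]
  rfl

theorem card_approvers_inr_zero (p : ℕ) (E : Fin m → Finset (U ⊕ Fin 3)) :
    #(approvers (reductionProfile p E) {Sum.inr 0}) = #(approvers E {Sum.inr 0}) + 1 := by
  simp [card_approvers]

theorem card_approvers_inl (p : ℕ) (E : Fin m → Finset (U ⊕ Fin 3)) (u : U) :
    #(approvers (reductionProfile p E) {Sum.inl u}) = #(approvers E {Sum.inl u}) + 2 * p := by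
  simp [card_approvers, mul_comm p]

theorem card_approvers_inr_zero_inl (p : ℕ) (E : Fin m → Finset (U ⊕ Fin 3)) (u : U) :
    #(approvers (reductionProfile p E) {Sum.inr 0, Sum.inl u})
      = #(approvers E {Sum.inr 0, Sum.inl u}) := by
  simp [card_approvers, insert_subset_iff, -subset_singleton_iff]

theorem approvers_pair_nonempty {p : ℕ} (hp : Nonempty U → 0 < p)
    (hcu : ∀ u, (approvers E {Sum.inr 0, Sum.inl u}).Nonempty) (a b : U ⊕ Fin 3) :
    (approvers (reductionProfile p E) {a, b}).Nonempty := by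
  have hinl (u : U) (k : Fin 3) : ∃ v, Sum.inl u ∈ reductionProfile p E v ∧
      Sum.inr k ∈ reductionProfile p E v := by
    obtain rfl | rfl | rfl : k = 0 ∨ k = 1 ∨ k = 2 := by omega
    · obtain ⟨i, hi⟩ := hcu u
      refine ⟨.inl i, ?_⟩
      simpa [reductionProfile, mem_approvers, insert_subset_iff, and_comm] using hi
    · exact ⟨.inr (.inl (3, ⟨0, hp ⟨u⟩⟩)), by simp [reductionProfile, redTop8]⟩
    · exact ⟨.inr (.inl (1, ⟨0, hp ⟨u⟩⟩)), by simp [reductionProfile, redTop8]⟩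
  suffices ∃ v, a ∈ reductionProfile p E v ∧ b ∈ reductionProfile p E v by
    simpa [Finset.Nonempty, mem_approvers, insert_subset_iff] using this
  rcases a with u | k <;> rcases b with v | l
  · exact ⟨.inr (.inl (1, ⟨0, hp ⟨u⟩⟩)), by simp [reductionProfile, redTop8]⟩
  · exact hinl u l
  · exact (hinl v k).imp fun _ ↦ And.symm
  · refine ⟨.inr (.inr ()), ?_⟩
    fin_cases k <;> fin_cases l <;> simp [reductionProfile, redTop8]

theorem card_approvers_inr_of_ne_zero (hE : ∀ i, E i ⊆ edgeBallot (e i)) (p : ℕ)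
    {k : Fin 3} (hk : k ≠ 0) :
    #(approvers (reductionProfile p E) {Sum.inr k}) = 2 * p + 1 := by
  rw [card_approvers, approvers_eq_empty_of_subset_edgeBallot hE hk (mem_singleton_self _)]
  obtain rfl | rfl : k = 1 ∨ k = 2 := by omega
  all_goals simp [mul_comm p]

theorem card_approvers_inr_inr (hE : ∀ i, E i ⊆ edgeBallot (e i)) (p : ℕ)
    {k l : Fin 3} (hkl : k ≠ l) :
    #(approvers (reductionProfile p E) {Sum.inr k, Sum.inr l}) = 1 := by
  have hempty : approvers E {Sum.inr k, Sum.inr l} = ∅ := by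
    rcases eq_or_ne k 0 with rfl | hk
    · exact approvers_eq_empty_of_subset_edgeBallot hE hkl.symm (by simp)
    · exact approvers_eq_empty_of_subset_edgeBallot hE hk (by simp)
  rw [card_approvers, hempty]
  fin_cases k <;> fin_cases l <;> simp [insert_subset_iff, -subset_singleton_iff] at hkl ⊢

end reductionProfile

section Winning

variable {w : ℕ → ℚ} {x : ℚ}

theorem two_mul_le_card_approvers_of_isWinning (hw0 : w 0 = 0) (hw1 : w 1 = 1) (hw2 : w 2 = 1 + x)
    (hE : ∀ i, E i ⊆ edgeBallot (e i))
    (hwin : IsWinning w 2 (reductionProfile p E) {Sum.inr 0, Sum.inr 1}) :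
    2 * p ≤ #(approvers E {Sum.inr 0}) := by
  have hdz := hwin.2 {Sum.inr 1, Sum.inr 2} (by simp)
  rw [thieleScore_pair hw0 hw1 hw2 _ (by simp), thieleScore_pair hw0 hw1 hw2 _ (by simp),
    reductionProfile.card_approvers_inr_zero,
    reductionProfile.card_approvers_inr_of_ne_zero hE p one_ne_zero,
    reductionProfile.card_approvers_inr_of_ne_zero hE p (k := 2) (by decide),
    reductionProfile.card_approvers_inr_inr hE p zero_ne_one,
    reductionProfile.card_approvers_inr_inr hE p (by decide)] at hdz
  push_cast at hdz
  exact_mod_cast (by linarith : (2 * p : ℚ) ≤ #(approvers E {Sum.inr 0}))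

theorem card_approvers_inr_zero_inl_le_one_of_isWinning
    (hw0 : w 0 = 0) (hw1 : w 1 = 1) (hw2 : w 2 = 1 + x)
    (hx0 : 0 < x) (hE : ∀ i, E i ⊆ edgeBallot (e i))
    (hwin : IsWinning w 2 (reductionProfile p E) {Sum.inr 0, Sum.inr 1}) (u : U) :
    #(approvers E {Sum.inr 0, Sum.inl u}) ≤ 1 := by
  have hcu := hwin.2 {Sum.inr 0, Sum.inl u} (by simp)
  rw [thieleScore_pair hw0 hw1 hw2 _ (by simp), thieleScore_pair hw0 hw1 hw2 _ (by simp),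
    reductionProfile.card_approvers_inl,
    reductionProfile.card_approvers_inr_of_ne_zero hE p one_ne_zero,
    reductionProfile.card_approvers_inr_inr hE p zero_ne_one,
    reductionProfile.card_approvers_inr_zero_inl] at hcu
  have hle : (#(approvers E {Sum.inr 0, Sum.inl u}) : ℚ) ≤ #(approvers E {Sum.inl u}) :=
    mod_cast card_le_card (approvers_anti E (by simp))
  push_cast at hcu
  have : x * #(approvers E {Sum.inr 0, Sum.inl u}) ≤ x * 1 := by linarith
  exact_mod_cast le_of_mul_le_mul_left this hx0

theorem isWinning_reductionProfile_coverBallots (hw0 : w 0 = 0) (hw1 : w 1 = 1) (hw2 : w 2 = 1 + x)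
    (hx1 : x ≤ 1) {B : Finset (Fin m)}
    (hB : #B = 2 * p) (hdisj : (B : Set (Fin m)).PairwiseDisjoint e)
    (hcov : B.biUnion e = univ) :
    IsWinning w 2 (reductionProfile p (coverBallots e B)) {Sum.inr 0, Sum.inr 1} := by
  have hE := coverBallots_subset_edgeBallot e B
  have hone := card_filter_mem_eq_one hdisj hcov
  refine isWinning_pair_of_card_approvers hw0 hw1 hw2 hx1 (n := 2 * p + 1) ?_ (by simp) ?_
  · rintro (u | k)
    · rw [reductionProfile.card_approvers_inl, approvers_coverBallots_inl, hone, add_comm]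
    · rcases eq_or_ne k 0 with rfl | hk
      · rw [reductionProfile.card_approvers_inr_zero, approvers_coverBallots_inr_zero, hB]
      · exact reductionProfile.card_approvers_inr_of_ne_zero hE p hk
  · intro a b _
    rw [reductionProfile.card_approvers_inr_inr hE p zero_ne_one, Nat.one_le_iff_ne_zero,
      card_ne_zero]
    have hcu (u : U) : (approvers (coverBallots e B) {Sum.inr 0, Sum.inl u}).Nonempty := by
      rw [← card_pos, approvers_coverBallots_inr_zero_inl, hone]
      exact one_pos
    refine reductionProfile.approvers_pair_nonempty (fun ⟨u⟩ ↦ ?_) hcu a b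
    have := card_filter_le B (u ∈ e ·)
    have := hone u
    omega

end Winning

end Reduction

theorem stmt8_general {U : Type*} [Fintype U] [DecidableEq U]
    (w : ℕ → ℚ) (hw0 : w 0 = 0) (hw1 : w 1 = 1)
    (x : ℚ) (hx0 : 0 < x) (hx1 : x ≤ 1) (hw2 : w 2 = 1 + x)
    (p r : ℕ) (hU : Fintype.card U = r * (2 * p))
    (m : ℕ) (e : Fin m → Finset U) (he : ∀ i, #(e i) = r)
    (L : Fin m → List (U ⊕ Fin 3))
    (hLnd : ∀ i, (L i).Nodup)
    (hLset : ∀ i, (L i).toFinset = (e i).image Sum.inl ∪ {Sum.inr 0})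
    (hLlast : ∀ i, (L i).getLast? = some (Sum.inr 0))
    (ordV : Fin m ⊕ (Fin 4 × Fin p) ⊕ Unit → List (U ⊕ Fin 3))
    (hordV : ∀ i, ordV (Sum.inl i) = L i)
    (hordV' : ∀ v, (∀ i, v ≠ Sum.inl i) → ordV v = []) :
    (∃ A : Fin m ⊕ (Fin 4 × Fin p) ⊕ Unit → Finset (U ⊕ Fin 3),
        IsLinCompletion (redTop8 U m p) ordV A ∧
        IsWinning w 2 A {Sum.inr 0, Sum.inr 1}) ↔
    (∃ B : Finset (Fin m), #B = 2 * p ∧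
        (∀ i ∈ B, ∀ j ∈ B, i ≠ j → Disjoint (e i) (e j)) ∧
        B.biUnion e = Finset.univ) := by
  simp only [isLinCompletion_redTop8_iff fun v ↦ hordV' (Sum.inr v) (by simp), hordV]
  constructor
  · rintro ⟨_, ⟨E, rfl, hE⟩, hwin⟩
    have hsub (i) : E i ⊆ edgeBallot (e i) := by
      obtain ⟨j, hj⟩ := hE i
      exact hj ▸ (toFinset_take_subset (L i) j).trans (hLset i).subset
    have hfull (i) (hi : Sum.inr 0 ∈ E i) : E i = edgeBallot (e i) := by
      obtain ⟨j, hj⟩ := hE i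
      rw [hj, List.mem_toFinset] at hi
      rw [hj, take_eq_self_of_getLast?_mem (hLnd i) (hLlast i) hi, hLset, edgeBallot]
    have hdisj := pairwiseDisjoint_approvers_inr_zero hfull
      (card_approvers_inr_zero_inl_le_one_of_isWinning hw0 hw1 hw2 hx0 hsub hwin)
    obtain ⟨B, hBsub, hB, hcov⟩ := exists_subset_card_eq_biUnion_eq_univ hU he
      (two_mul_le_card_approvers_of_isWinning hw0 hw1 hw2 hsub hwin) hdisj
    exact ⟨B, hB, fun i hi j hj ↦ hdisj (hBsub hi) (hBsub hj), hcov⟩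
  · rintro ⟨B, hB, hdisj, hcov⟩
    refine ⟨_, ⟨coverBallots e B, rfl, fun i ↦ ?_⟩, isWinning_reductionProfile_coverBallots
      hw0 hw1 hw2 hx1 hB (fun i hi j hj ↦ hdisj i hi j hj) hcov⟩
    by_cases hi : i ∈ B
    · exact ⟨(L i).length, by simp [coverBallots, edgeBallot, hi, hLset]⟩
    · exact ⟨0, by simp [coverBallots, hi]⟩

theorem stmt8 {U : Type*} [Fintype U] [DecidableEq U]
    (w : ℕ → ℚ) (hwmono : Monotone w) (hw0 : w 0 = 0) (hw1 : w 1 = 1)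
    (x : ℚ) (hx0 : 0 < x) (hx1 : x ≤ 1) (hw2 : w 2 = 1 + x)
    (p : ℕ) (hp : 2 ≤ p)   -- `q = 2 * p`, so `q` is even and `q ≥ 4`
    (hU : Fintype.card U = 3 * (2 * p))
    (m : ℕ) (e : Fin m → Finset U) (he : ∀ i, (e i).card = 3)
    -- the linear order on `Middle(v_{e_i}) = e_i ∪ {c}`, ranking `c` last:
    (L : Fin m → List (U ⊕ Fin 3))
    (hLnd : ∀ i, (L i).Nodup)
    (hLset : ∀ i, (L i).toFinset = (e i).image Sum.inl ∪ {Sum.inr 0})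
    (hLlast : ∀ i, (L i).getLast? = some (Sum.inr 0))
    -- the full order function: voters other than the `v_{e_i}` have empty middle
    (ordV : Fin m ⊕ (Fin 4 × Fin p) ⊕ Unit → List (U ⊕ Fin 3))
    (hordV : ∀ i, ordV (Sum.inl i) = L i)
    (hordV' : ∀ v, (∀ i, v ≠ Sum.inl i) → ordV v = []) :
    (∃ A : Fin m ⊕ (Fin 4 × Fin p) ⊕ Unit → Finset (U ⊕ Fin 3),
        IsLinCompletion (redTop8 U m p) ordV A ∧
        IsWinning w 2 A {Sum.inr 0, Sum.inr 1}) ↔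
    (∃ B : Finset (Fin m), B.card = 2 * p ∧
        (∀ i ∈ B, ∀ j ∈ B, i ≠ j → Disjoint (e i) (e j)) ∧
        B.biUnion e = Finset.univ) :=
  stmt8_general w hw0 hw1 x hx0 hx1 hw2 p 3 hU m e he L hLnd hLset hLlast ordV hordV hordV'
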